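/- arXiv:1209.1192 — 2 statements merged into one kernel-verified Lean document; each statement's English description precedes it below -/
import Mathlib

section
/- (Lemma 1.) Let μ, κ > −1 be real, n ∈ ℕ, α ≥ 0 real, and l ∈ ℕ with l ≥ 1 and l−1 ≤ α < l. Then for every t ∈ (0,1], the Riemann–Liouville fractional derivative of order α of the Jacobi polynomial P_n^{(μ,κ)} at t equals Σ_{j=0}^{n} Σ_{m=0}^{n−j} c_{μ,κ,n,j,m} · (Γ(n−m+1)/Γ(n−m+1−α)) · t^{n−m−α}, where c_{μ,κ,n,j,m} = (−1)^m · C(n+μ, j) · C(n+κ, n−j) · C(n−j, m). -/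
/-- Generalized binomial coefficient `C(x, k) = Γ(x+1)/(Γ(k+1)·Γ(x−k+1))`. -/
noncomputable def genBinom (x : ℝ) (k : ℕ) : ℝ :=
  Real.Gamma (x + 1) / (Real.Gamma ((k : ℝ) + 1) * Real.Gamma (x - (k : ℝ) + 1))

/-- The `n`-th Jacobi orthogonal polynomial on `[0,1]`. -/
noncomputable def jacobiP (μ κ : ℝ) (n : ℕ) (t : ℝ) : ℝ :=
  ∑ j ∈ Finset.range (n + 1),
    genBinom ((n : ℝ) + μ) j * genBinom ((n : ℝ) + κ) (n - j) * (t - 1) ^ (n - j) * t ^ j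

/-- The Riemann–Liouville fractional derivative of order `α` (with `l - 1 ≤ α < l`)
of `f` at `x`. -/
noncomputable def rlDeriv (α : ℝ) (l : ℕ) (f : ℝ → ℝ) (x : ℝ) : ℝ :=
  (1 / Real.Gamma ((l : ℝ) - α)) *
    iteratedDeriv l (fun u => ∫ τ in (0:ℝ)..u, (u - τ) ^ ((l : ℝ) - α - 1) * f τ) x

/-!
On a power `τ ^ p` with `p > -1`, the Riemann–Liouville integral of order `β > 0` is a Beta integral
and gives `Γ(p + 1) / Γ(p + 1 + β) * u ^ (p + β)`; differentiating `l` times with `β = l - α` turns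
this into `Γ(p + 1) / Γ(p + 1 - α) * t ^ (p - α)`. The poles of `Γ` cause no trouble because
`1 / Γ(s) = s / Γ(s + 1)` holds for every real `s` once `1 / Γ` is read as `0` at the poles. The
Jacobi polynomial is a linear combination of powers by the binomial theorem applied to
`(t - 1) ^ (n - j)`.
-/

open MeasureTheory Topology

theorem inv_Gamma_eq_self_mul_inv_Gamma_add_one (s : ℝ) :
    (Real.Gamma s)⁻¹ = s * (Real.Gamma (s + 1))⁻¹ := by
  have h := Complex.one_div_Gamma_eq_self_mul_one_div_Gamma_add_one s
  rw [← Complex.ofReal_one, ← Complex.ofReal_add, Complex.Gamma_ofReal, Complex.Gamma_ofReal] at h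
  exact_mod_cast h

theorem descPochhammer_eval_eq_Gamma_div_Gamma {q : ℝ} (hq : Real.Gamma (q + 1) ≠ 0) (k : ℕ) :
    (descPochhammer ℝ k).eval q = Real.Gamma (q + 1) / Real.Gamma (q + 1 - k) := by
  induction k with
  | zero => simp [hq]
  | succ k ih =>
    have hshift : q + 1 - (k + 1 : ℕ) = q - k := by push_cast; ring
    rw [descPochhammer_succ_eval, ih, hshift, div_eq_mul_inv, div_eq_mul_inv,
      inv_Gamma_eq_self_mul_inv_Gamma_add_one (q - k), sub_add_eq_add_sub]
    ring

theorem iteratedDeriv_rpow_const {q : ℝ} (hq : Real.Gamma (q + 1) ≠ 0) (k : ℕ) (t : ℝ) :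
    iteratedDeriv k (fun u : ℝ => u ^ q) t =
      Real.Gamma (q + 1) / Real.Gamma (q + 1 - k) * t ^ (q - k) := by
  rw [iteratedDeriv_eq_iterate, Real.iter_deriv_rpow_const,
    descPochhammer_eval_eq_Gamma_div_Gamma hq]

theorem integral_sub_rpow_mul_rpow {β p u : ℝ} (hβ : 0 < β) (hp : -1 < p) (hu : 0 < u) :
    ∫ τ in (0 : ℝ)..u, (u - τ) ^ (β - 1) * τ ^ p =
      Real.Gamma β * (Real.Gamma (p + 1) / Real.Gamma (p + 1 + β)) * u ^ (p + β) := by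
  have hp' : 0 < p + 1 := by linarith
  have hcomplex : ((∫ τ in (0 : ℝ)..u, (u - τ) ^ (β - 1) * τ ^ p : ℝ) : ℂ) =
      ∫ τ in (0 : ℝ)..u, (τ : ℂ) ^ (((p + 1 : ℝ) : ℂ) - 1) * ((u : ℂ) - τ) ^ ((β : ℂ) - 1) := by
    rw [← intervalIntegral.integral_ofReal]
    refine intervalIntegral.integral_congr fun τ hτ => ?_
    rw [Set.uIcc_of_le hu.le] at hτ
    simp only [Complex.ofReal_mul, Complex.ofReal_cpow hτ.1,
      Complex.ofReal_cpow (sub_nonneg.2 hτ.2)]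
    push_cast
    rw [add_sub_cancel_right, mul_comm]
  have hexp : ((p + 1 : ℝ) : ℂ) + β - 1 = ((p + β : ℝ) : ℂ) := by push_cast; ring
  rw [Complex.betaIntegral_scaled _ _ hu, Complex.betaIntegral_eq_Gamma_mul_div _ _
    (by simpa using hp') (by simpa using hβ), hexp, ← Complex.ofReal_add,
    Complex.Gamma_ofReal, Complex.Gamma_ofReal, Complex.Gamma_ofReal,
    ← Complex.ofReal_cpow hu.le] at hcomplex
  norm_cast at hcomplex
  rw [hcomplex]
  ring

-- A non-integrable function would have integral `0`, whereas the Beta integral is positive.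
theorem intervalIntegrable_sub_rpow_mul_rpow {β p u : ℝ} (hβ : 0 < β) (hp : -1 < p) (hu : 0 < u) :
    IntervalIntegrable (fun τ : ℝ => (u - τ) ^ (β - 1) * τ ^ p) volume 0 u := by
  refine intervalIntegral.intervalIntegrable_of_integral_ne_zero ?_
  rw [integral_sub_rpow_mul_rpow hβ hp hu]
  have hΓβ := Real.Gamma_pos_of_pos hβ
  have hΓp := Real.Gamma_pos_of_pos (by linarith : 0 < p + 1)
  have hΓpβ := Real.Gamma_pos_of_pos (by linarith : 0 < p + 1 + β)
  exact (mul_pos (mul_pos hΓβ (div_pos hΓp hΓpβ)) (Real.rpow_pos_of_pos hu _)).ne'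

section RiemannLiouville

/-- The Riemann–Liouville fractional integral of order `β` of `f`, based at `0`. The fractional
derivative of order `α` is the `l`-th derivative of the integral of order `l - α`. -/
noncomputable def rlIntegral (β : ℝ) (f : ℝ → ℝ) (u : ℝ) : ℝ :=
  1 / Real.Gamma β * ∫ τ in (0 : ℝ)..u, (u - τ) ^ (β - 1) * f τ

theorem rlDeriv_eq_iteratedDeriv_rlIntegral (α : ℝ) (l : ℕ) (f : ℝ → ℝ) (t : ℝ) :
    rlDeriv α l f t = iteratedDeriv l (rlIntegral (l - α) f) t :=
  (iteratedDeriv_const_mul_field _ _).symm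

variable {ι : Type*} {s : Finset ι} {c p : ι → ℝ}

theorem rlIntegral_sum_mul_rpow {β u : ℝ} (hβ : 0 < β) (hp : ∀ i ∈ s, -1 < p i) (hu : 0 < u) :
    rlIntegral β (fun τ => ∑ i ∈ s, c i * τ ^ p i) u =
      ∑ i ∈ s, c i * (Real.Gamma (p i + 1) / Real.Gamma (p i + 1 + β)) * u ^ (p i + β) := by
  have hΓ : Real.Gamma β ≠ 0 := (Real.Gamma_pos_of_pos hβ).ne'
  simp only [rlIntegral, Finset.mul_sum, mul_left_comm _ (c _)]
  rw [intervalIntegral.integral_finsetSum fun i hi =>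
    (intervalIntegrable_sub_rpow_mul_rpow hβ (hp i hi) hu).const_mul (c i), Finset.mul_sum]
  refine Finset.sum_congr rfl fun i hi => ?_
  rw [intervalIntegral.integral_const_mul, integral_sub_rpow_mul_rpow hβ (hp i hi) hu]
  field_simp

theorem rlDeriv_sum_mul_rpow {α t : ℝ} {l : ℕ} (hα : α < l) (hp : ∀ i ∈ s, -1 < p i)
    (ht : 0 < t) :
    rlDeriv α l (fun τ => ∑ i ∈ s, c i * τ ^ p i) t =
      ∑ i ∈ s, c i * (Real.Gamma (p i + 1) / Real.Gamma (p i + 1 - α)) * t ^ (p i - α) := by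
  have hβ : 0 < l - α := sub_pos.2 hα
  have hint : rlIntegral (l - α) (fun τ => ∑ i ∈ s, c i * τ ^ p i) =ᶠ[𝓝 t] fun u => ∑ i ∈ s,
      c i * (Real.Gamma (p i + 1) / Real.Gamma (p i + 1 + (l - α))) * u ^ (p i + (l - α)) := by
    filter_upwards [lt_mem_nhds ht] with u hu using rlIntegral_sum_mul_rpow hβ hp hu
  rw [rlDeriv_eq_iteratedDeriv_rlIntegral, hint.iteratedDeriv_eq, iteratedDeriv_fun_sum fun i _ =>
    contDiffAt_const.mul (Real.contDiffAt_rpow_const_of_ne ht.ne')]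
  refine Finset.sum_congr rfl fun i hi => ?_
  have hΓ : Real.Gamma (p i + (l - α) + 1) ≠ 0 :=
    (Real.Gamma_pos_of_pos (by linarith [hp i hi])).ne'
  rw [iteratedDeriv_const_mul_field, iteratedDeriv_rpow_const hΓ,
    show p i + (l - α) + 1 - l = p i + 1 - α by ring,
    show p i + (l - α) - l = p i - α by ring, add_right_comm (p i) 1]
  field_simp

end RiemannLiouville

/-- The coefficient `c_{μ,κ,n,j,m}` of `t ^ (n - m)` in the binomial expansion of the `j`-th summand
of the Jacobi polynomial. -/
noncomputable def jacobiCoeff (μ κ : ℝ) (n j m : ℕ) : ℝ :=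
  (-1 : ℝ) ^ m * genBinom ((n : ℝ) + μ) j * genBinom ((n : ℝ) + κ) (n - j) *
    ((n - j).choose m : ℝ)

theorem jacobiP_eq_sum_jacobiCoeff_mul_rpow (μ κ : ℝ) (n : ℕ) (t : ℝ) :
    jacobiP μ κ n t = ∑ j ∈ Finset.range (n + 1), ∑ m ∈ Finset.range (n - j + 1),
      jacobiCoeff μ κ n j m * t ^ ((n : ℝ) - m) := by
  refine Finset.sum_congr rfl fun j hj => ?_
  rw [sub_eq_neg_add, add_pow, Finset.mul_sum, Finset.sum_mul]
  refine Finset.sum_congr rfl fun m hm => ?_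
  rw [Finset.mem_range] at hj hm
  rw [← Nat.cast_sub (by lia : m ≤ n), Real.rpow_natCast, show n - m = n - j - m + j by lia,
    pow_add, jacobiCoeff]
  ring

theorem stmt3_general (μ κ : ℝ) (n : ℕ) {α t : ℝ} {l : ℕ} (hα : α < l) (ht : 0 < t) :
    rlDeriv α l (jacobiP μ κ n) t =
      ∑ j ∈ Finset.range (n + 1), ∑ m ∈ Finset.range (n - j + 1),
        jacobiCoeff μ κ n j m *
          (Real.Gamma ((n : ℝ) - m + 1) / Real.Gamma ((n : ℝ) - m + 1 - α)) *
          t ^ ((n : ℝ) - m - α) := by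
  have hexpand : jacobiP μ κ n = fun τ => ∑ x ∈ (Finset.range (n + 1)).sigma
      (fun j => Finset.range (n - j + 1)), jacobiCoeff μ κ n x.1 x.2 * τ ^ ((n : ℝ) - x.2) := by
    funext τ
    rw [jacobiP_eq_sum_jacobiCoeff_mul_rpow, Finset.sum_sigma]
  rw [hexpand, rlDeriv_sum_mul_rpow hα (fun x hx => ?_) ht, Finset.sum_sigma]
  have hle : x.2 ≤ n := by
    simp only [Finset.mem_sigma, Finset.mem_range] at hx
    lia
  linarith [Nat.cast_le (α := ℝ).2 hle]

theorem stmt3 (μ κ : ℝ) (hμ : -1 < μ) (hκ : -1 < κ) (n : ℕ)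
    (α : ℝ) (hα : 0 ≤ α) (l : ℕ) (hl : 1 ≤ l) (hα1 : (l : ℝ) - 1 ≤ α) (hα2 : α < l)
    (t : ℝ) (ht : t ∈ Set.Ioc (0:ℝ) 1) :
    rlDeriv α l (jacobiP μ κ n) t =
      ∑ j ∈ Finset.range (n + 1), ∑ m ∈ Finset.range (n - j + 1),
        ((-1 : ℝ) ^ m * genBinom ((n : ℝ) + μ) j * genBinom ((n : ℝ) + κ) (n - j) *
            ((n - j).choose m : ℝ)) *
          (Real.Gamma ((n : ℝ) - (m : ℝ) + 1) / Real.Gamma ((n : ℝ) - (m : ℝ) + 1 - α)) *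
          t ^ ((n : ℝ) - (m : ℝ) - α) :=
  stmt3_general μ κ n hα2 ht.1
end

section
/- For all real μ, κ > −1 and all m, n ∈ ℕ with m ≠ n, the Jacobi polynomials are orthogonal with respect to the weight w_{μ,κ}: ∫_0^1 (1−t)^μ · t^κ · P_m^{(μ,κ)}(t) · P_n^{(μ,κ)}(t) dt = 0. -/
/-!
Expand the lower-degree factor in powers `t ^ k` with `k < n`. Against the weight, every term of
`t ^ k * P_n` is a Beta integral, whose Gamma factors cancel those of the coefficients of `P_n` up
to a constant independent of `j`. What remains is `∑ j, (-1) ^ (n - j) * C(n, j) * (κ + 1 + j)_k`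
with `(·)_k` the rising factorial: the `n`-th finite difference of a polynomial of degree `k < n`,
which vanishes.
-/

open MeasureTheory Polynomial Set
open ProbabilityTheory (beta)

/-- The weight `w_{μ,κ}` on `[0, 1]` with respect to which Jacobi polynomials are orthogonal. -/
noncomputable def jacobiWeight (μ κ t : ℝ) : ℝ :=
  (1 - t) ^ μ * t ^ κ

/-- The Jacobi polynomial `jacobiP μ κ n` as a formal polynomial, giving access to its degree. -/
noncomputable def jacobiPolynomial (μ κ : ℝ) (n : ℕ) : ℝ[X] :=
  ∑ j ∈ Finset.range (n + 1),
    C (genBinom (n + μ) j * genBinom (n + κ) (n - j)) * ((X - C 1) ^ (n - j) * X ^ j)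

section Coefficients

theorem gamma_add_natCast {x : ℝ} (hx : ∀ k : ℕ, x ≠ -k) (k : ℕ) :
    Real.Gamma (x + k) = (ascPochhammer ℝ k).eval x * Real.Gamma x := by
  induction k with
  | zero => simp
  | succ k ih =>
    have hxk : x + k ≠ 0 := fun h => hx k (eq_neg_of_add_eq_zero_left h)
    rw [Nat.cast_succ, ← add_assoc, Real.Gamma_add_one hxk, ih, ascPochhammer_succ_eval]
    ring

theorem sum_neg_one_pow_mul_choose_mul_eval_eq_zero {R : Type*} [CommRing R] {p : R[X]} {n : ℕ}
    (hp : p.natDegree < n) (x : R) :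
    ∑ j ∈ Finset.range (n + 1), (-1) ^ (n - j) * n.choose j * p.eval (x + j) = 0 := by
  have hdiff := congrFun (Polynomial.fwdDiff_iter_eq_zero_of_degree_lt hp) x
  rw [fwdDiff_iter_eq_sum_shift] at hdiff
  simpa using hdiff

theorem genBinom_add_natCast (x : ℝ) (k : ℕ) :
    genBinom (x + k) k = Real.Gamma (x + k + 1) / (k.factorial * Real.Gamma (x + 1)) := by
  rw [genBinom, Real.Gamma_nat_eq_factorial, add_sub_cancel_right]

theorem genBinom_mul_genBinom (μ κ : ℝ) {n j : ℕ} (hj : j ≤ n) :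
    genBinom (n + μ) j * genBinom (n + κ) (n - j) =
      Real.Gamma (n + μ + 1) * Real.Gamma (n + κ + 1) / n.factorial *
        (n.choose j / (Real.Gamma (μ + (n - j : ℕ) + 1) * Real.Gamma (κ + j + 1))) := by
  have hμ : (n : ℝ) + μ = μ + (n - j : ℕ) + j := by push_cast [hj]; ring
  have hκ : (n : ℝ) + κ = κ + j + (n - j : ℕ) := by push_cast [hj]; ring
  rw [hμ, hκ, genBinom_add_natCast, genBinom_add_natCast, Nat.cast_choose ℝ hj]
  simp only [div_eq_mul_inv, mul_inv]
  field_simp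

end Coefficients

section Polynomials

variable (μ κ : ℝ) (n : ℕ)

theorem eval_jacobiPolynomial (t : ℝ) : (jacobiPolynomial μ κ n).eval t = jacobiP μ κ n t := by
  simp [jacobiPolynomial, jacobiP, eval_finsetSum, mul_assoc]

theorem natDegree_jacobiPolynomial_le : (jacobiPolynomial μ κ n).natDegree ≤ n := by
  refine natDegree_sum_le_of_forall_le _ _ fun j hj => ?_
  have hj : j ≤ n := Finset.mem_range_succ_iff.mp hj
  calc
    _ ≤ ((X - C (1 : ℝ)) ^ (n - j) * X ^ j).natDegree := natDegree_C_mul_le _ _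
    _ ≤ ((X - C (1 : ℝ)) ^ (n - j)).natDegree + (X ^ j : ℝ[X]).natDegree := natDegree_mul_le
    _ = n := by
      rw [natDegree_pow, natDegree_X_sub_C, natDegree_X_pow, mul_one, Nat.sub_add_cancel hj]

theorem continuous_jacobiP : Continuous (jacobiP μ κ n) := by
  simpa only [eval_jacobiPolynomial] using (jacobiPolynomial μ κ n).continuous

end Polynomials

section Weight

variable {μ κ : ℝ}

theorem ofReal_jacobiWeight {t : ℝ} (ht : t ∈ Icc 0 1) :
    (jacobiWeight μ κ t : ℂ) =
      (t : ℂ) ^ (((κ + 1 : ℝ) : ℂ) - 1) * (1 - (t : ℂ)) ^ (((μ + 1 : ℝ) : ℂ) - 1) := by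
  rw [jacobiWeight, Complex.ofReal_mul, Complex.ofReal_cpow (sub_nonneg.mpr ht.2),
    Complex.ofReal_cpow ht.1]
  push_cast
  ring_nf

theorem jacobiWeight_mul_pow_mul_pow {t : ℝ} (ht : t ∈ Ioo 0 1) (a b : ℕ) :
    jacobiWeight μ κ t * ((t - 1) ^ a * t ^ b) = (-1) ^ a * jacobiWeight (μ + a) (κ + b) t := by
  rw [jacobiWeight, jacobiWeight, Real.rpow_add_natCast (sub_pos.mpr ht.2).ne',
    Real.rpow_add_natCast ht.1.ne', ← neg_sub 1 t, neg_pow]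
  ring

theorem intervalIntegrable_jacobiWeight (hμ : -1 < μ) (hκ : -1 < κ) :
    IntervalIntegrable (jacobiWeight μ κ) volume 0 1 := by
  have hconv := Complex.betaIntegral_convergent (u := (κ + 1 : ℝ)) (v := (μ + 1 : ℝ))
    (by rw [Complex.ofReal_re]; linarith) (by rw [Complex.ofReal_re]; linarith)
  have hofReal : IntervalIntegrable (fun t => (jacobiWeight μ κ t : ℂ)) volume 0 1 :=
    hconv.congr_uIoo fun t ht =>
      (ofReal_jacobiWeight (Ioo_subset_Icc_self (uIoo_of_le (zero_le_one' ℝ) ▸ ht))).symm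
  exact ⟨hofReal.1.re, hofReal.2.re⟩

theorem integral_jacobiWeight (hμ : -1 < μ) (hκ : -1 < κ) :
    ∫ t in (0 : ℝ)..1, jacobiWeight μ κ t = beta (κ + 1) (μ + 1) := by
  have hcomplex : ((∫ t in (0 : ℝ)..1, jacobiWeight μ κ t : ℝ) : ℂ) =
      Complex.betaIntegral (κ + 1 : ℝ) (μ + 1 : ℝ) := by
    rw [← intervalIntegral.integral_ofReal]
    exact intervalIntegral.integral_congr fun t ht =>
      ofReal_jacobiWeight (uIcc_of_le (zero_le_one' ℝ) ▸ ht)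
  rw [ProbabilityTheory.beta_eq_betaIntegralReal _ _ (by linarith) (by linarith), ← hcomplex,
    Complex.ofReal_re]

theorem integral_jacobiWeight_mul_pow_mul_pow (hμ : -1 < μ) (hκ : -1 < κ) (a b : ℕ) :
    ∫ t in (0 : ℝ)..1, jacobiWeight μ κ t * ((t - 1) ^ a * t ^ b) =
      (-1) ^ a * beta (κ + b + 1) (μ + a + 1) := by
  have ha : -1 < μ + a := by linarith [a.cast_nonneg (α := ℝ)]
  have hb : -1 < κ + b := by linarith [b.cast_nonneg (α := ℝ)]
  rw [← integral_jacobiWeight ha hb, ← intervalIntegral.integral_const_mul]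
  exact intervalIntegral.integral_congr_uIoo fun t ht =>
    jacobiWeight_mul_pow_mul_pow (uIoo_of_le (zero_le_one' ℝ) ▸ ht) a b

end Weight

section Orthogonality

variable {μ κ : ℝ}

theorem genBinom_mul_genBinom_mul_beta (hμ : -1 < μ) (hκ : -1 < κ) {n j : ℕ} (hj : j ≤ n) (k : ℕ) :
    genBinom (n + μ) j * genBinom (n + κ) (n - j) *
        beta (κ + (j + k : ℕ) + 1) (μ + (n - j : ℕ) + 1) =
      Real.Gamma (n + μ + 1) * Real.Gamma (n + κ + 1) /
        (n.factorial * Real.Gamma (μ + κ + n + k + 2)) *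
          (n.choose j * (ascPochhammer ℝ k).eval (κ + 1 + j)) := by
  have hx : 0 < κ + 1 + j := by linarith [j.cast_nonneg (α := ℝ)]
  have hy : 0 < μ + (n - j : ℕ) + 1 := by linarith [(n - j).cast_nonneg (α := ℝ)]
  have hx_ne : ∀ i : ℕ, κ + 1 + j ≠ -i := fun i => by linarith [i.cast_nonneg (α := ℝ)]
  have hsum : κ + (j + k : ℕ) + 1 + (μ + (n - j : ℕ) + 1) = μ + κ + n + k + 2 := by
    push_cast [hj]; ring
  have hshift : κ + (j + k : ℕ) + 1 = κ + 1 + j + k := by push_cast; ring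
  rw [beta, hsum, hshift, gamma_add_natCast hx_ne, genBinom_mul_genBinom μ κ hj,
    add_right_comm κ j 1]
  have hΓx := (Real.Gamma_pos_of_pos hx).ne'
  have hΓy := (Real.Gamma_pos_of_pos hy).ne'
  field_simp

theorem integral_jacobiWeight_mul_pow_mul_jacobiP_eq_zero (hμ : -1 < μ) (hκ : -1 < κ)
    {k n : ℕ} (hk : k < n) :
    ∫ t in (0 : ℝ)..1, jacobiWeight μ κ t * (t ^ k * jacobiP μ κ n t) = 0 := by
  have hexpand (t : ℝ) : jacobiWeight μ κ t * (t ^ k * jacobiP μ κ n t) =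
      ∑ j ∈ Finset.range (n + 1), genBinom (n + μ) j * genBinom (n + κ) (n - j) *
        (jacobiWeight μ κ t * ((t - 1) ^ (n - j) * t ^ (j + k))) := by
    rw [jacobiP, Finset.mul_sum, Finset.mul_sum]
    exact Finset.sum_congr rfl fun j _ => by ring
  have hint (j : ℕ) : IntervalIntegrable
      (fun t => jacobiWeight μ κ t * ((t - 1) ^ (n - j) * t ^ (j + k))) volume 0 1 :=
    (intervalIntegrable_jacobiWeight hμ hκ).mul_continuousOn (by fun_prop)
  have hdeg : (ascPochhammer ℝ k).natDegree < n := by rwa [ascPochhammer_natDegree]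
  simp_rw [hexpand]
  rw [intervalIntegral.integral_finsetSum fun j _ => (hint j).const_mul _]
  calc
    _ = ∑ j ∈ Finset.range (n + 1), Real.Gamma (n + μ + 1) * Real.Gamma (n + κ + 1) /
          (n.factorial * Real.Gamma (μ + κ + n + k + 2)) *
            ((-1) ^ (n - j) * n.choose j * (ascPochhammer ℝ k).eval (κ + 1 + j)) := by
      refine Finset.sum_congr rfl fun j hj => ?_
      have hcoeff := genBinom_mul_genBinom_mul_beta hμ hκ (Finset.mem_range_succ_iff.mp hj) k
      rw [intervalIntegral.integral_const_mul, integral_jacobiWeight_mul_pow_mul_pow hμ hκ]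
      linear_combination (-1) ^ (n - j) * hcoeff
    _ = 0 := by
      rw [← Finset.mul_sum, sum_neg_one_pow_mul_choose_mul_eval_eq_zero hdeg, mul_zero]

theorem integral_jacobiWeight_mul_eval_mul_jacobiP_eq_zero (hμ : -1 < μ) (hκ : -1 < κ)
    {p : ℝ[X]} {n : ℕ} (hp : p.natDegree < n) :
    ∫ t in (0 : ℝ)..1, jacobiWeight μ κ t * p.eval t * jacobiP μ κ n t = 0 := by
  have hexpand (t : ℝ) : jacobiWeight μ κ t * p.eval t * jacobiP μ κ n t =
      ∑ k ∈ Finset.range n, p.coeff k * (jacobiWeight μ κ t * (t ^ k * jacobiP μ κ n t)) := by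
    rw [eval_eq_sum_range' hp, Finset.mul_sum, Finset.sum_mul]
    exact Finset.sum_congr rfl fun k _ => by ring
  have hint (k : ℕ) : IntervalIntegrable
      (fun t => jacobiWeight μ κ t * (t ^ k * jacobiP μ κ n t)) volume 0 1 :=
    (intervalIntegrable_jacobiWeight hμ hκ).mul_continuousOn
      ((continuous_pow k).mul (continuous_jacobiP μ κ n)).continuousOn
  simp_rw [hexpand]
  rw [intervalIntegral.integral_finsetSum fun k _ => (hint k).const_mul _]
  refine Finset.sum_eq_zero fun k hk => ?_
  rw [intervalIntegral.integral_const_mul,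
    integral_jacobiWeight_mul_pow_mul_jacobiP_eq_zero hμ hκ (Finset.mem_range.mp hk), mul_zero]

theorem integral_jacobiWeight_mul_jacobiP_mul_jacobiP_eq_zero_of_lt (hμ : -1 < μ) (hκ : -1 < κ)
    {m n : ℕ} (hmn : m < n) :
    ∫ t in (0 : ℝ)..1, jacobiWeight μ κ t * jacobiP μ κ m t * jacobiP μ κ n t = 0 := by
  simpa only [eval_jacobiPolynomial] using integral_jacobiWeight_mul_eval_mul_jacobiP_eq_zero hμ hκ
    ((natDegree_jacobiPolynomial_le μ κ m).trans_lt hmn)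

end Orthogonality

theorem stmt5 (μ κ : ℝ) (hμ : -1 < μ) (hκ : -1 < κ) (m n : ℕ) (hmn : m ≠ n) :
    ∫ t in (0:ℝ)..1, (1 - t) ^ μ * t ^ κ * jacobiP μ κ m t * jacobiP μ κ n t = 0 := by
  rcases hmn.lt_or_gt with hlt | hgt
  · exact integral_jacobiWeight_mul_jacobiP_mul_jacobiP_eq_zero_of_lt hμ hκ hlt
  · simp_rw [mul_right_comm _ (jacobiP μ κ m _)]
    exact integral_jacobiWeight_mul_jacobiP_mul_jacobiP_eq_zero_of_lt hμ hκ hgt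
end
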